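/- Let R be an EZ-category and X a set-valued presheaf on R. Then any element x : R[r] → X factors, in an essentially unique way, as a degeneracy operator ρ_x : R[r] ↠ R[s] followed by a non-degenerate element σ_x : R[s] → X; essentially unique means that between any two such factorizations there is a unique isomorphism R[s] ≅ R[s'] making both triangles commute. -/

import Mathlib

namespace GenReedyPaper

open CategoryTheory CategoryTheory.Limits

universe w v u

/-- `f` is a retract of `g` in the arrow category. -/
def IsRetractOf {E : Type u} [Category.{v} E] {A B X Y : E} (f : A ⟶ B) (g : X ⟶ Y) : Prop :=
  ∃ (i : A ⟶ X) (p : X ⟶ A) (j : B ⟶ Y) (q : Y ⟶ B),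
    i ≫ p = 𝟙 A ∧ j ≫ q = 𝟙 B ∧ i ≫ g = f ≫ j ∧ g ≫ q = p ≫ f

/-- A Quillen (closed) model structure on a category: three classes of maps
(weak equivalences, cofibrations, fibrations) satisfying two-out-of-three,
closure under retracts, the lifting axioms and the factorization axioms. -/
structure ModelStr (E : Type u) [Category.{v} E] where
  weq : MorphismProperty E
  cof : MorphismProperty E
  fib : MorphismProperty E
  weq_comp : ∀ {X Y Z : E} (f : X ⟶ Y) (g : Y ⟶ Z), weq f → weq g → weq (f ≫ g)
  weq_cancel_left : ∀ {X Y Z : E} (f : X ⟶ Y) (g : Y ⟶ Z), weq f → weq (f ≫ g) → weq g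
  weq_cancel_right : ∀ {X Y Z : E} (f : X ⟶ Y) (g : Y ⟶ Z), weq g → weq (f ≫ g) → weq f
  weq_retract : ∀ {A B X Y : E} (f : A ⟶ B) (g : X ⟶ Y), IsRetractOf f g → weq g → weq f
  cof_retract : ∀ {A B X Y : E} (f : A ⟶ B) (g : X ⟶ Y), IsRetractOf f g → cof g → cof f
  fib_retract : ∀ {A B X Y : E} (f : A ⟶ B) (g : X ⟶ Y), IsRetractOf f g → fib g → fib f
  lift_trivCof_fib : ∀ {A B X Y : E} (i : A ⟶ B) (p : X ⟶ Y),
    cof i → weq i → fib p → HasLiftingProperty i p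
  lift_cof_trivFib : ∀ {A B X Y : E} (i : A ⟶ B) (p : X ⟶ Y),
    cof i → fib p → weq p → HasLiftingProperty i p
  fact_trivCof_fib : ∀ {X Y : E} (f : X ⟶ Y),
    ∃ (Z : E) (g : X ⟶ Z) (h : Z ⟶ Y), cof g ∧ weq g ∧ fib h ∧ g ≫ h = f
  fact_cof_trivFib : ∀ {X Y : E} (f : X ⟶ Y),
    ∃ (Z : E) (g : X ⟶ Z) (h : Z ⟶ Y), cof g ∧ fib h ∧ weq h ∧ g ≫ h = f

/-- A generalized Reedy structure in the sense of Berger--Moerdijk: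
wide subcategories `plus` (`R⁺`) and `minus` (`R⁻`) and a degree function
satisfying axioms (i)-(iv) of Definition 1.1. -/
structure GRStructure (R : Type u) [Category.{v} R] where
  plus : MorphismProperty R
  minus : MorphismProperty R
  deg : R → ℕ
  plus_id : ∀ r : R, plus (𝟙 r)
  minus_id : ∀ r : R, minus (𝟙 r)
  plus_comp : ∀ {r s t : R} (f : r ⟶ s) (g : s ⟶ t), plus f → plus g → plus (f ≫ g)
  minus_comp : ∀ {r s t : R} (f : r ⟶ s) (g : s ⟶ t), minus f → minus g → minus (f ≫ g)
  /-- (i): non-invertible morphisms of `R⁺` raise the degree -/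
  plus_raises : ∀ {r s : R} (f : r ⟶ s), plus f → ¬ IsIso f → deg r < deg s
  /-- (i): non-invertible morphisms of `R⁻` lower the degree -/
  minus_lowers : ∀ {r s : R} (f : r ⟶ s), minus f → ¬ IsIso f → deg s < deg r
  /-- (i): isomorphisms preserve the degree -/
  iso_deg : ∀ {r s : R} (f : r ⟶ s), IsIso f → deg r = deg s
  /-- (ii): `R⁺ ∩ R⁻ = Iso(R)` -/
  iso_iff : ∀ {r s : R} (f : r ⟶ s), (plus f ∧ minus f) ↔ IsIso f
  /-- (iii): every morphism factors as a map of `R⁻` followed by a map of `R⁺` -/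
  factor : ∀ {r s : R} (f : r ⟶ s),
    ∃ (t : R) (h : r ⟶ t) (g : t ⟶ s), minus h ∧ plus g ∧ h ≫ g = f
  /-- (iii): the factorization is unique up to isomorphism -/
  factor_unique : ∀ {r s : R} (f : r ⟶ s) {t t' : R} (h : r ⟶ t) (g : t ⟶ s)
    (h' : r ⟶ t') (g' : t' ⟶ s), minus h → plus g → h ≫ g = f →
    minus h' → plus g' → h' ≫ g' = f →
    ∃ θ : t ≅ t', h ≫ θ.hom = h' ∧ θ.hom ≫ g' = g
  /-- (iv): if `θ∘f = f` for an isomorphism `θ` and `f ∈ R⁻`, then `θ` is an identity -/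
  minus_cancel : ∀ {r s : R} (f : r ⟶ s) (θ : Aut s), minus f → f ≫ θ.hom = f → θ = 1

/-- Axiom (iv)': a generalized Reedy structure is dualizable if
`f∘θ = f` with `θ` an isomorphism and `f ∈ R⁺` implies that `θ` is an identity. -/
def GRStructure.Dualizable {R : Type u} [Category.{v} R] (S : GRStructure R) : Prop :=
  ∀ {r s : R} (f : r ⟶ s) (θ : Aut r), S.plus f → θ.hom ≫ f = f → θ = 1

/-- A morphism of generalized Reedy categories: a functor preserving `R⁺`, `R⁻`
and the degree. -/
structure IsGRMorphism {R : Type u} [Category.{v} R] {S : Type w} [Category.{v} S]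
    (RS : GRStructure R) (SS : GRStructure S) (φ : R ⥤ S) : Prop where
  map_plus : ∀ {r s : R} (f : r ⟶ s), RS.plus f → SS.plus (φ.map f)
  map_minus : ∀ {r s : R} (f : r ⟶ s), RS.minus f → SS.minus (φ.map f)
  map_deg : ∀ r : R, SS.deg (φ.obj r) = RS.deg r


section EZ

open Opposite

variable {R : Type v} [SmallCategory R]

/-- An Eilenberg–Zilber (EZ-) structure on a small category `R` (Definition 6.6):
a degree function such that (i) monomorphisms preserve (resp. raise) the degree iff
they are invertible (resp. non-invertible); (ii) every morphism factors as a split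
epimorphism followed by a monomorphism; (iii) every pair of split epimorphisms with
common domain has an absolute pushout (a pushout preserved by the Yoneda embedding,
equivalently by every functor). -/
structure EZStructure (R : Type v) [SmallCategory R] where
  deg : R → ℕ
  mono_iso_deg : ∀ {r s : R} (f : r ⟶ s), Mono f → IsIso f → deg r = deg s
  mono_raises : ∀ {r s : R} (f : r ⟶ s), Mono f → ¬ IsIso f → deg r < deg s
  factor : ∀ {r s : R} (f : r ⟶ s), ∃ (t : R) (p : r ⟶ t) (m : t ⟶ s),
    IsSplitEpi p ∧ Mono m ∧ p ≫ m = f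
  absolute_pushout : ∀ {r s t : R} (p : r ⟶ s) (q : r ⟶ t),
    IsSplitEpi p → IsSplitEpi q →
    ∃ (z : R) (p' : s ⟶ z) (q' : t ⟶ z),
      IsPushout (yoneda.map p) (yoneda.map q) (yoneda.map p') (yoneda.map q')

/-- An element `x : R[r] → X` of a presheaf is degenerate if it factors through a
non-invertible degeneracy operator (split epimorphism) `R[r] → R[s]`. -/
def IsDegenerate (X : Rᵒᵖ ⥤ Type v) {r : R} (x : yoneda.obj r ⟶ X) : Prop :=
  ∃ (s : R) (p : r ⟶ s), IsSplitEpi p ∧ ¬ IsIso p ∧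
    ∃ y : yoneda.obj s ⟶ X, yoneda.map p ≫ y = x

end EZ

section Stmt16

open CategoryTheory Opposite

variable {R : Type v} [SmallCategory R]

theorem ez_deg_lt (EZ : EZStructure R) {r s : R} (p : r ⟶ s) (hp : IsSplitEpi p)
    (hn : ¬ IsIso p) : EZ.deg s < EZ.deg r := by
  refine EZ.mono_raises (section_ p) inferInstance fun h => hn ?_
  have h1 : section_ p ≫ p = 𝟙 s := IsSplitEpi.id p
  have : IsIso (section_ p ≫ p) := by rw [h1]; infer_instance
  exact IsIso.of_isIso_comp_left (section_ p) p

theorem ez_exists (EZ : EZStructure R) (X : Rᵒᵖ ⥤ Type v) : ∀ (n : ℕ) (r : R)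
    (x : yoneda.obj r ⟶ X), EZ.deg r = n → ∃ (s : R) (p : r ⟶ s) (σ : yoneda.obj s ⟶ X),
      IsSplitEpi p ∧ ¬ IsDegenerate X σ ∧ yoneda.map p ≫ σ = x := by
  intro n
  induction n using Nat.strong_induction_on with
  | _ n ih =>
    intro r x hr
    by_cases hx : IsDegenerate X x
    · obtain ⟨s, p, hp, hn, y, hy⟩ := hx
      have hlt := ez_deg_lt EZ p hp hn
      obtain ⟨t, q, σ, hq, hσ, hqσ⟩ := ih (EZ.deg s) (by omega) s y rfl
      exact ⟨t, p ≫ q, σ, inferInstance, hσ, by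
        rw [Functor.map_comp, Category.assoc, hqσ, hy]⟩
    · exact ⟨r, 𝟙 r, x, inferInstance, hx, by simp⟩

theorem ez_split_of_epi {r s : R} (p : r ⟶ s) (h : Epi (yoneda.map p)) : IsSplitEpi p := by
  have h1 := (NatTrans.epi_iff_epi_app (yoneda.map p)).1 h (op s)
  rw [epi_iff_surjective] at h1
  obtain ⟨j, hj⟩ := h1 (𝟙 s)
  exact ⟨⟨⟨j, hj⟩⟩⟩

/-- **Proposition 6.7 (Eilenberg–Zilber lemma)**. Let `R` be an EZ-category and `X` a
set-valued presheaf on `R`.  Then every element `x : R[r] → X` factors, in an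
essentially unique way, as a degeneracy operator `ρ : R[r] ↠ R[s]` followed by a
non-degenerate element `σ : R[s] → X`; between any two such factorizations there is a
unique isomorphism making both triangles commute. -/
theorem eilenberg_zilber_lemma (EZ : EZStructure R) (X : Rᵒᵖ ⥤ Type v)
    (r : R) (x : yoneda.obj r ⟶ X) :
    ∃ (s : R) (p : r ⟶ s) (σ : yoneda.obj s ⟶ X),
      IsSplitEpi p ∧ ¬ IsDegenerate X σ ∧ yoneda.map p ≫ σ = x ∧
      ∀ (s' : R) (p' : r ⟶ s') (σ' : yoneda.obj s' ⟶ X),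
        IsSplitEpi p' → ¬ IsDegenerate X σ' → yoneda.map p' ≫ σ' = x →
        ∃! θ : s ≅ s', p ≫ θ.hom = p' ∧ yoneda.map θ.hom ≫ σ' = σ := by
  obtain ⟨s, p, σ, hp, hσ, hx⟩ := ez_exists EZ X _ r x rfl
  refine ⟨s, p, σ, hp, hσ, hx, ?_⟩
  intro s' p' σ' hp' hσ' hx'
  obtain ⟨z, a, b, hpo⟩ := EZ.absolute_pushout p p' hp hp'
  have ha : IsSplitEpi a := ez_split_of_epi a
    (MorphismProperty.of_isPushout (P := MorphismProperty.epimorphisms _) hpo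
      (inferInstance : Epi (yoneda.map p')))
  have hb : IsSplitEpi b := ez_split_of_epi b
    (MorphismProperty.of_isPushout (P := MorphismProperty.epimorphisms _) hpo.flip
      (inferInstance : Epi (yoneda.map p)))
  have hw : p ≫ a = p' ≫ b := yoneda.map_injective (by simpa using hpo.w)
  have h1 : yoneda.map a ≫ hpo.desc σ σ' (hx.trans hx'.symm) = σ := hpo.inl_desc _ _ _
  have h2 : yoneda.map b ≫ hpo.desc σ σ' (hx.trans hx'.symm) = σ' := hpo.inr_desc _ _ _
  generalize hpo.desc σ σ' (hx.trans hx'.symm) = y at h1 h2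
  have ia : IsIso a := by
    by_contra hn
    exact hσ ⟨z, a, ha, hn, _, h1⟩
  have ib : IsIso b := by
    by_contra hn
    exact hσ' ⟨z, b, hb, hn, _, h2⟩
  refine ⟨asIso a ≪≫ (asIso b).symm, ⟨?_, ?_⟩, ?_⟩
  · simp [reassoc_of% hw]
  · rw [← h1, ← h2, ← Category.assoc, ← Functor.map_comp]
    simp
  · rintro θ ⟨hθ, -⟩
    ext
    rw [← cancel_epi p, hθ]
    simp [reassoc_of% hw]

end Stmt16

end GenReedyPaper
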